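/- arXiv:1110.2403 — 3 statements merged into one kernel-verified Lean document; each statement's English description precedes it below -/
import Mathlib

section
/- Let α > 0 be real, β = 0, c > 0, and let θ ∈ [0, 2π), φ ∈ [0, 2π). Then the function u(t,x) = e^{iφ}·√(c/α)·( e^{iθ} − 12·cos θ / (3 + 2·c·(x − c·t)²·cos²θ) ) is smooth on ℝ×ℝ and satisfies the complex mKdV equation u_t + α·conj(u)·u·u_x + u_xxx = 0 at every point (t,x) ∈ ℝ×ℝ. -/
/-- Left-hand side of the complex mKdV equation (γ = 1):
`u_t + α·conj(u)·u·u_x + β·u²·conj(u)_x + u_xxx`. -/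
noncomputable def mkdvLHS (α β : ℂ) (u : ℝ → ℝ → ℂ) (t x : ℝ) : ℂ :=
  deriv (fun s => u s x) t
    + α * (starRingEnd ℂ) (u t x) * u t x * deriv (u t) x
    + β * (u t x) ^ 2 * deriv (fun y => (starRingEnd ℂ) (u t y)) x
    + deriv (deriv (deriv (u t))) x

/-!
A travelling wave `u(t, x) = v(x - ct)` solves the equation iff its profile `v` solves an ODE.
For `v = K(E - w)` with `w` real, `‖E‖ = 1` and `α‖K‖² = c`, that ODE follows from the real equation
`w''' = c(2kw - w²)w'` with `k = Re E`, which is the derivative of `w'' = c(kw² - w³/3)`.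
The rational profile `w(ξ) = 12k / (3 + 2cξ²k²)` satisfies `w' = -(ck/3) ξ w²`; differentiating once
more and eliminating `ξ²` through `w(3 + 2cξ²k²) = 12k` yields the second-order equation.
-/

open Complex ComplexConjugate

section TravellingWave

theorem deriv_comp_const_sub_mul {𝕜 F : Type*} [NontriviallyNormedField 𝕜] [NormedAddCommGroup F]
    [NormedSpace 𝕜 F] (v : 𝕜 → F) (c x t : 𝕜) :
    deriv (fun s => v (x - c * s)) t = -(c • deriv v (x - c * t)) := by
  rw [deriv_comp_mul_left c (fun z => v (x - z)) t, deriv_comp_const_sub, smul_neg]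

theorem mkdvLHS_travellingWave (α β : ℂ) (v : ℝ → ℂ) (c t x : ℝ) :
    mkdvLHS α β (fun s y => v (y - c * s)) t x =
      -(c * deriv v (x - c * t))
        + α * conj (v (x - c * t)) * v (x - c * t) * deriv v (x - c * t)
        + β * v (x - c * t) ^ 2 * deriv (fun ξ => conj (v ξ)) (x - c * t)
        + deriv (deriv (deriv v)) (x - c * t) := by
  have deriv_shift (f : ℝ → ℂ) : deriv (fun y => f (y - c * t)) = fun y => deriv f (y - c * t) :=
    funext (deriv_comp_sub_const f (c * t))
  simp only [mkdvLHS, deriv_comp_const_sub_mul, deriv_shift, deriv_shift fun ξ => conj (v ξ),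
    real_smul]

end TravellingWave

section RealProfile

theorem deriv_const_mul_ofReal {f : ℝ → ℝ} (hf : Differentiable ℝ f) (K : ℂ) :
    deriv (fun ξ => K * (f ξ : ℂ)) = fun ξ => K * ((deriv f ξ : ℝ) : ℂ) :=
  funext fun ξ => ((hf ξ).hasDerivAt.ofReal_comp.const_mul K).deriv

theorem deriv_const_mul_const_sub_ofReal {f : ℝ → ℝ} (hf : Differentiable ℝ f) (K E : ℂ) :
    deriv (fun ξ => K * (E - f ξ)) = fun ξ => -K * ((deriv f ξ : ℝ) : ℂ) := by
  funext ξ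
  rw [(((hf ξ).hasDerivAt.ofReal_comp.const_sub E).const_mul K).deriv, mul_neg, neg_mul]

theorem deriv_deriv_deriv_const_mul_const_sub_ofReal {f : ℝ → ℝ} (hf : ContDiff ℝ 3 f) (K E : ℂ) :
    deriv (deriv (deriv fun ξ => K * (E - f ξ))) =
      fun ξ => -K * ((deriv (deriv (deriv f)) ξ : ℝ) : ℂ) := by
  have hf' : ContDiff ℝ 2 (deriv f) := hf.deriv'
  have hf'' : ContDiff ℝ 1 (deriv (deriv f)) := hf'.deriv'
  rw [deriv_const_mul_const_sub_ofReal (hf.differentiable (by norm_num)),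
    deriv_const_mul_ofReal (hf'.differentiable (by norm_num)),
    deriv_const_mul_ofReal (hf''.differentiable (by norm_num))]

theorem conj_sub_ofReal_mul_sub_ofReal {E : ℂ} (hE : ‖E‖ = 1) (r : ℝ) :
    conj (E - r) * (E - r) = 1 - 2 * E.re * r + r ^ 2 := by
  have conj_mul : conj E * E = 1 := by rw [conj_mul', hE, ofReal_one, one_pow]
  have add_conj : E + conj E = 2 * E.re := by rw [Complex.add_conj, ofReal_mul, ofReal_ofNat]
  rw [map_sub, conj_ofReal]
  linear_combination conj_mul - r * add_conj

theorem mkdvLHS_const_mul_const_sub_ofReal {α K E : ℂ} {c : ℝ} (hK : α * ‖K‖ ^ 2 = c)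
    (hE : ‖E‖ = 1) {f : ℝ → ℝ} (hf : ContDiff ℝ 3 f) (t x : ℝ) :
    mkdvLHS α 0 (fun s y => K * (E - f (y - c * s))) t x =
      -K * ((deriv (deriv (deriv f)) (x - c * t)
        - c * (2 * E.re * f (x - c * t) - f (x - c * t) ^ 2) * deriv f (x - c * t) : ℝ) : ℂ) := by
  rw [mkdvLHS_travellingWave α 0 (fun ξ => K * (E - f ξ)),
    deriv_deriv_deriv_const_mul_const_sub_ofReal hf,
    deriv_const_mul_const_sub_ofReal (hf.differentiable (by norm_num))]
  generalize x - c * t = ξ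
  have modulus_sq : α * (conj (K * (E - f ξ)) * (K * (E - f ξ))) =
      c * (1 - 2 * E.re * f ξ + f ξ ^ 2) := by
    rw [← conj_sub_ofReal_mul_sub_ofReal hE, ← hK, ← conj_mul', map_mul]
    ring
  push_cast
  linear_combination -K * (deriv f ξ : ℝ) * modulus_sq

end RealProfile

/-- The real rational profile `w` of the solitary wave `K (E - w(x - ct))` of speed `c`; the
parameter `k` stands for `Re E`. -/
noncomputable def solitaryProfile (c k ξ : ℝ) : ℝ :=
  12 * k / (3 + 2 * c * ξ ^ 2 * k ^ 2)

section SolitaryProfile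

variable {c : ℝ}

theorem solitaryProfile_mul_denom (hc : 0 ≤ c) (k ξ : ℝ) :
    solitaryProfile c k ξ * (3 + 2 * c * ξ ^ 2 * k ^ 2) = 12 * k :=
  div_mul_cancel₀ _ (by positivity)

theorem contDiff_solitaryProfile (hc : 0 ≤ c) (k : ℝ) {n : WithTop ℕ∞} :
    ContDiff ℝ n (solitaryProfile c k) :=
  contDiff_const.div (by fun_prop) fun ξ => by positivity

theorem hasDerivAt_solitaryProfile (hc : 0 ≤ c) (k ξ : ℝ) :
    HasDerivAt (solitaryProfile c k) (-(c * k / 3) * ξ * solitaryProfile c k ξ ^ 2) ξ := by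
  have denom_ne_zero : 3 + 2 * c * ξ ^ 2 * k ^ 2 ≠ 0 := by positivity
  have denom_deriv : HasDerivAt (fun ξ => 3 + 2 * c * ξ ^ 2 * k ^ 2)
      (2 * c * (2 * ξ) * k ^ 2) ξ := by
    simpa using (((hasDerivAt_pow 2 ξ).const_mul (2 * c)).mul_const (k ^ 2)).const_add 3
  refine ((hasDerivAt_const ξ (12 * k)).fun_div denom_deriv denom_ne_zero).congr_deriv ?_
  rw [solitaryProfile]
  field_simp
  ring

theorem deriv_solitaryProfile (hc : 0 ≤ c) (k : ℝ) :
    deriv (solitaryProfile c k) = fun ξ => -(c * k / 3) * ξ * solitaryProfile c k ξ ^ 2 :=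
  funext fun ξ => (hasDerivAt_solitaryProfile hc k ξ).deriv

theorem deriv_deriv_solitaryProfile (hc : 0 ≤ c) (k : ℝ) :
    deriv (deriv (solitaryProfile c k)) =
      fun ξ => c * (k * solitaryProfile c k ξ ^ 2 - solitaryProfile c k ξ ^ 3 / 3) := by
  funext ξ
  rw [deriv_solitaryProfile hc, (((hasDerivAt_id' ξ).const_mul (-(c * k / 3))).fun_mul
    ((hasDerivAt_solitaryProfile hc k ξ).fun_pow 2)).deriv]
  linear_combination c / 9 * solitaryProfile c k ξ ^ 2 * solitaryProfile_mul_denom hc k ξ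

theorem deriv_deriv_deriv_solitaryProfile (hc : 0 ≤ c) (k ξ : ℝ) :
    deriv (deriv (deriv (solitaryProfile c k))) ξ =
      c * (2 * k * solitaryProfile c k ξ - solitaryProfile c k ξ ^ 2)
        * deriv (solitaryProfile c k) ξ := by
  have profile_deriv : HasDerivAt (solitaryProfile c k) (deriv (solitaryProfile c k) ξ) ξ :=
    (hasDerivAt_solitaryProfile hc k ξ).differentiableAt.hasDerivAt
  rw [deriv_deriv_solitaryProfile hc, ((((profile_deriv.fun_pow 2).const_mul k).fun_sub
    ((profile_deriv.fun_pow 3).div_const 3)).const_mul c).deriv]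
  ring

end SolitaryProfile

/-- The rational solitary wave of speed `c` with complex amplitude `K` and background phase `E`;
in the polar parametrization `K = e^{iφ} √(c/α)` and `E = e^{iθ}`. -/
noncomputable def solitaryWave (K E : ℂ) (c t x : ℝ) : ℂ :=
  K * (E - solitaryProfile c E.re (x - c * t))

theorem contDiff_uncurry_solitaryWave (K E : ℂ) {c : ℝ} (hc : 0 ≤ c) {n : WithTop ℕ∞} :
    ContDiff ℝ n (Function.uncurry (solitaryWave K E c)) := by
  have phase : ContDiff ℝ n fun p : ℝ × ℝ => p.2 - c * p.1 := by fun_prop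
  exact contDiff_const.mul (contDiff_const.sub
    (ofRealCLM.contDiff.comp ((contDiff_solitaryProfile hc E.re).comp phase)))

theorem mkdvLHS_solitaryWave {α K E : ℂ} {c : ℝ} (hc : 0 ≤ c) (hK : α * ‖K‖ ^ 2 = c)
    (hE : ‖E‖ = 1) (t x : ℝ) : mkdvLHS α 0 (solitaryWave K E c) t x = 0 := by
  unfold solitaryWave
  rw [mkdvLHS_const_mul_const_sub_ofReal hK hE (contDiff_solitaryProfile hc E.re),
    deriv_deriv_deriv_solitaryProfile hc, sub_self, ofReal_zero, mul_zero]

theorem norm_exp_mul_sqrt_sq {r : ℝ} (hr : 0 ≤ r) (φ : ℝ) :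
    ‖exp (φ * I) * (√r : ℝ)‖ ^ 2 = r := by
  rw [norm_mul, norm_exp_ofReal_mul_I, one_mul, norm_real, Real.norm_eq_abs, sq_abs,
    Real.sq_sqrt hr]

/-- the complex rational solitary wave (solitary2) for `Im α = 0`, `β = 0`. -/
theorem stmt6 (α : ℝ) (hα : 0 < α) (c : ℝ) (hc : 0 < c)
    (θ φ : ℝ) (hθ : θ ∈ Set.Ico 0 (2 * Real.pi)) (hφ : φ ∈ Set.Ico 0 (2 * Real.pi))
    (u : ℝ → ℝ → ℂ)
    (hu : ∀ t x : ℝ, u t x =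
      Complex.exp ((φ : ℂ) * Complex.I) * ((Real.sqrt (c / α) : ℝ) : ℂ) *
        (Complex.exp ((θ : ℂ) * Complex.I)
          - ((12 * Real.cos θ /
              (3 + 2 * c * (x - c * t) ^ 2 * (Real.cos θ) ^ 2) : ℝ) : ℂ))) :
    ContDiff ℝ (⊤ : ℕ∞) (Function.uncurry u)
      ∧ ∀ t x : ℝ, mkdvLHS (α : ℂ) 0 u t x = 0 := by
  set K : ℂ := exp (φ * I) * (√(c / α) : ℝ)
  set E : ℂ := exp (θ * I) with hE
  have u_eq : u = solitaryWave K E c := by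
    funext t x
    rw [hu, solitaryWave, solitaryProfile, hE, exp_ofReal_mul_I_re]
  have amplitude : (α : ℂ) * ‖K‖ ^ 2 = c := by
    rw [← ofReal_pow, norm_exp_mul_sqrt_sq (by positivity), ← ofReal_mul, mul_div_cancel₀ _ hα.ne']
  rw [u_eq]
  exact ⟨contDiff_uncurry_solitaryWave K E hc.le,
    mkdvLHS_solitaryWave hc.le amplitude (norm_exp_ofReal_mul_I θ)⟩
end

section
/- Let α, β ∈ ℂ with Im(α + β) = 0 and Re(α + β) > 0, let c > 0, and let Θ ∈ ℝ, φ ∈ [0, 2π). Then the function u(t,x) = e^{iφ}·√(c/(α+β))·( tanh Θ + 6·sech Θ / ( 2·sinh Θ + √(6 + 4·sinh²Θ)·cosh(√c·(x − c·t)·sech Θ) ) ) is smooth on ℝ×ℝ (the denominator never vanishes) and satisfies the complex mKdV equation u_t + α·conj(u)·u·u_x + β·u²·conj(u)_x + u_xxx = 0 at every point (t,x) ∈ ℝ×ℝ. In particular, for Θ = 0 this is the solitary wave u(t,x) = e^{iφ}·√(6c/(α+β))·sech(√c·(x − c·t)). -/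
/-- Hyperbolic secant. -/
noncomputable def sech (x : ℝ) : ℝ := 1 / Real.cosh x

section TravelingWave

/-- The wave with profile `f` moving to the right at speed `c`; time is the first argument. -/
def travelingWave (c : ℝ) (f : ℝ → ℂ) (t x : ℝ) : ℂ := f (x - c * t)

variable (c : ℝ) (f : ℝ → ℂ)

lemma deriv_travelingWave (t : ℝ) :
    deriv (travelingWave c f t) = travelingWave c (deriv f) t :=
  funext fun x => deriv_comp_sub_const f (c * t) x

lemma deriv_travelingWave_time (t x : ℝ) :
    deriv (fun s => travelingWave c f s x) t = -c * travelingWave c (deriv f) t x :=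
  calc
    deriv (fun s => f (x - c * s)) t = c • deriv (fun y => f (x - y)) (c * t) :=
      deriv_comp_mul_left c (fun y => f (x - y)) t
    _ = -c * deriv f (x - c * t) := by
      rw [deriv_comp_const_sub, Complex.real_smul, mul_neg, neg_mul]

lemma deriv_ofReal_comp (F : ℝ → ℝ) :
    deriv (fun z => (F z : ℂ)) = fun z => ((deriv F z : ℝ) : ℂ) := by
  funext z
  by_cases hF : DifferentiableAt ℝ F z
  · exact hF.hasDerivAt.ofReal_comp.deriv
  · have hF' : ¬ DifferentiableAt ℝ (fun z => (F z : ℂ)) z := fun h =>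
      hF (Complex.reCLM.differentiableAt.comp z h)
    rw [deriv_zero_of_not_differentiableAt hF, deriv_zero_of_not_differentiableAt hF',
      Complex.ofReal_zero]

lemma deriv_const_mul_ofReal_comp (A : ℂ) (F : ℝ → ℝ) :
    deriv (fun z => A * (F z : ℂ)) = fun z => A * ((deriv F z : ℝ) : ℂ) := by
  rw [deriv_const_mul_field', deriv_ofReal_comp]

lemma mkdvLHS_travelingWave (α β : ℂ) (t x : ℝ) :
    mkdvLHS α β (travelingWave c f) t x =
      travelingWave c (fun z => -c * deriv f z + α * starRingEnd ℂ (f z) * f z * deriv f z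
        + β * f z ^ 2 * starRingEnd ℂ (deriv f z) + deriv (deriv (deriv f)) z) t x := by
  have deriv_conj : deriv (fun y => starRingEnd ℂ (travelingWave c f t y)) x =
      starRingEnd ℂ (travelingWave c (deriv f) t x) := by
    rw [← deriv_travelingWave]
    exact deriv.star
  simp only [mkdvLHS, deriv_travelingWave_time, deriv_conj, deriv_travelingWave]
  rfl

lemma mkdvLHS_travelingWave_const_mul_ofReal (α β A : ℂ) (F : ℝ → ℝ) (t x : ℝ) :
    mkdvLHS α β (travelingWave c fun z => A * (F z : ℂ)) t x =
      travelingWave c (fun z => A * (((deriv (deriv (deriv F)) z : ℝ) : ℂ)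
        + ((α + β) * ‖A‖ ^ 2 * F z ^ 2 - c) * ((deriv F z : ℝ) : ℂ))) t x := by
  simp only [mkdvLHS_travelingWave, travelingWave, deriv_const_mul_ofReal_comp, map_mul,
    Complex.conj_ofReal, ← Complex.conj_mul']
  ring

lemma contDiff_uncurry_travelingWave {n : WithTop ℕ∞} {f : ℝ → ℂ} (hf : ContDiff ℝ n f) :
    ContDiff ℝ n (Function.uncurry (travelingWave c f)) :=
  hf.comp (contDiff_snd.sub (contDiff_const.mul contDiff_fst))

end TravelingWave

section RecipCosh

/-- The reciprocal of `p + r cosh (k z)`, whose affine images are the profiles of solitary waves;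
it takes the junk value `0` where the denominator vanishes. -/
noncomputable def recipCosh (p r k z : ℝ) : ℝ := (p + r * Real.cosh (k * z))⁻¹

lemma add_mul_cosh_pos {p r : ℝ} (h : |p| < r) (y : ℝ) : 0 < p + r * Real.cosh y := by
  have hr : r ≤ r * Real.cosh y :=
    le_mul_of_one_le_right ((abs_nonneg p).trans h.le) (Real.one_le_cosh y)
  linarith [neg_abs_le p]

variable {p r k : ℝ}

lemma contDiff_recipCosh {n : WithTop ℕ∞} (h : ∀ z, p + r * Real.cosh (k * z) ≠ 0) :
    ContDiff ℝ n (recipCosh p r k) :=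
  ContDiff.inv (by fun_prop) h

lemma hasDerivAt_recipCosh {z : ℝ} (hz : p + r * Real.cosh (k * z) ≠ 0) :
    HasDerivAt (recipCosh p r k) (-(r * k * Real.sinh (k * z)) * recipCosh p r k z ^ 2) z := by
  have hk : HasDerivAt (fun z => k * z) k z := hasDerivAt_const_mul k
  refine (((hk.cosh.const_mul r).const_add p).inv hz).congr_deriv ?_
  rw [recipCosh, inv_pow]
  ring

lemma deriv_deriv_recipCosh (h : ∀ z, p + r * Real.cosh (k * z) ≠ 0) (z : ℝ) :
    deriv (deriv (recipCosh p r k)) z =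
      k ^ 2 * (recipCosh p r k z - 3 * p * recipCosh p r k z ^ 2
        + 2 * (p ^ 2 - r ^ 2) * recipCosh p r k z ^ 3) := by
  have deriv_eq : deriv (recipCosh p r k) =
      fun z => -(r * k * Real.sinh (k * z)) * recipCosh p r k z ^ 2 :=
    funext fun z => (hasDerivAt_recipCosh (h z)).deriv
  have hk : HasDerivAt (fun z => k * z) k z := hasDerivAt_const_mul k
  have hcosh : (p + r * Real.cosh (k * z)) * recipCosh p r k z = 1 := mul_inv_cancel₀ (h z)
  have hsinh := Real.cosh_sq (k * z)
  rw [deriv_eq]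
  refine (((hk.sinh.const_mul (r * k)).fun_neg.mul
    ((hasDerivAt_recipCosh (h z)).fun_pow 2)).congr_deriv ?_).deriv
  generalize recipCosh p r k z = v at *
  generalize Real.cosh (k * z) = C at *
  generalize Real.sinh (k * z) = s at *
  have hC : r * C * v = 1 - p * v := by linear_combination hcosh
  have hs : (r * s) ^ 2 * v ^ 2 = (1 - p * v) ^ 2 - r ^ 2 * v ^ 2 := by
    linear_combination (r * C * v + 1 - p * v) * hC - r ^ 2 * v ^ 2 * hsinh
  simp only [Nat.cast_ofNat, Nat.add_one_sub_one, pow_one]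
  linear_combination -k ^ 2 * v * hC + 2 * k ^ 2 * v * hs

lemma deriv_deriv_deriv_recipCosh (h : ∀ z, p + r * Real.cosh (k * z) ≠ 0) (z : ℝ) :
    deriv (deriv (deriv (recipCosh p r k))) z =
      k ^ 2 * (1 - 6 * p * recipCosh p r k z + 6 * (p ^ 2 - r ^ 2) * recipCosh p r k z ^ 2)
        * deriv (recipCosh p r k) z := by
  have hv : HasDerivAt (recipCosh p r k) (deriv (recipCosh p r k) z) z :=
    (hasDerivAt_recipCosh (h z)).differentiableAt.hasDerivAt
  rw [funext (deriv_deriv_recipCosh h)]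
  refine ((((hv.sub ((hv.fun_pow 2).const_mul (3 * p))).add
    ((hv.fun_pow 3).const_mul (2 * (p ^ 2 - r ^ 2)))).const_mul (k ^ 2)).congr_deriv ?_).deriv
  simp only [Nat.cast_ofNat, Nat.add_one_sub_one, pow_one]
  ring

end RecipCosh

section SolitonProfile

lemma one_sub_tanh_sq (Θ : ℝ) : 1 - Real.tanh Θ ^ 2 = sech Θ ^ 2 := by
  have hcosh := (Real.cosh_pos Θ).ne'
  rw [Real.tanh_eq_sinh_div_cosh, sech]
  field_simp
  exact Real.cosh_sq_sub_sinh_sq Θ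

lemma sinh_mul_sech (Θ : ℝ) : Real.sinh Θ * sech Θ = Real.tanh Θ := by
  rw [Real.tanh_eq_sinh_div_cosh, sech, mul_one_div]

/-- The real profile of the complex solitary wave of speed `c` and parameter `Θ`, normalized by
the amplitude `√(c / (α + β))`. -/
noncomputable def solitonProfile (c Θ z : ℝ) : ℝ :=
  Real.tanh Θ + 6 * sech Θ /
    (2 * Real.sinh Θ + √(6 + 4 * Real.sinh Θ ^ 2) * Real.cosh (√c * z * sech Θ))

lemma two_mul_add_sqrt_mul_cosh_pos (a y : ℝ) : 0 < 2 * a + √(6 + 4 * a ^ 2) * Real.cosh y :=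
  add_mul_cosh_pos (Real.lt_sqrt_of_sq_lt (by rw [sq_abs]; linarith)) y

lemma solitonProfile_eq_add_mul_recipCosh (c Θ : ℝ) :
    solitonProfile c Θ = fun z => Real.tanh Θ +
      6 * sech Θ * recipCosh (2 * Real.sinh Θ) √(6 + 4 * Real.sinh Θ ^ 2) (√c * sech Θ) z := by
  funext z
  rw [solitonProfile, recipCosh, mul_right_comm √c, div_eq_mul_inv]

lemma contDiff_solitonProfile {n : WithTop ℕ∞} (c Θ : ℝ) : ContDiff ℝ n (solitonProfile c Θ) := by
  rw [solitonProfile_eq_add_mul_recipCosh]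
  exact contDiff_const.add <| contDiff_const.mul <|
    contDiff_recipCosh fun _ => (two_mul_add_sqrt_mul_cosh_pos _ _).ne'

lemma deriv_deriv_deriv_solitonProfile {c : ℝ} (hc : 0 ≤ c) (Θ z : ℝ) :
    deriv (deriv (deriv (solitonProfile c Θ))) z =
      c * (1 - solitonProfile c Θ z ^ 2) * deriv (solitonProfile c Θ) z := by
  have hr : √(6 + 4 * Real.sinh Θ ^ 2) ^ 2 = 6 + 4 * Real.sinh Θ ^ 2 :=
    Real.sq_sqrt (by positivity)
  have hk : (√c * sech Θ) ^ 2 = c * sech Θ ^ 2 := by rw [mul_pow, Real.sq_sqrt hc]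
  simp only [solitonProfile_eq_add_mul_recipCosh, deriv_const_add', deriv_const_mul_field']
  rw [deriv_deriv_deriv_recipCosh fun _ => (two_mul_add_sqrt_mul_cosh_pos _ _).ne', hr, hk]
  generalize recipCosh _ _ _ z = v
  generalize deriv (recipCosh _ _ _) z = v'
  have constant_coeff := one_sub_tanh_sq Θ
  have linear_coeff := sinh_mul_sech Θ
  -- The coefficients of `v ^ 2` agree because `r ^ 2 - p ^ 2 = 6`.
  linear_combination
    (-6 * c * sech Θ * v') * constant_coeff - (72 * c * sech Θ ^ 2 * v * v') * linear_coeff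

lemma solitonProfile_zero (c z : ℝ) : solitonProfile c 0 z = √6 * sech (√c * z) := by
  have hsqrt : (6 : ℝ) / √6 = √6 := Real.div_sqrt
  simp only [solitonProfile, sech, Real.tanh_zero, Real.sinh_zero, Real.cosh_zero, div_one,
    mul_one, mul_zero, zero_add, ne_eq, OfNat.ofNat_ne_zero, not_false_eq_true, zero_pow, add_zero]
  rw [← div_div, hsqrt, mul_one_div]

end SolitonProfile

lemma norm_exp_mul_I_mul_sqrt_sq {a : ℝ} (ha : 0 ≤ a) (φ : ℝ) :
    ‖Complex.exp (φ * Complex.I) * (√a : ℂ)‖ ^ 2 = a := by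
  rw [norm_mul, Complex.norm_exp_ofReal_mul_I, one_mul, Complex.norm_real,
    Real.norm_of_nonneg (Real.sqrt_nonneg a), Real.sq_sqrt ha]

/-- the complex solitary wave (solitary3) for `Im(α+β) = 0`, `Re(α+β) > 0`;
for `Θ = 0` it reduces to the sech solitary wave. -/
theorem stmt7 (α β : ℂ) (him : (α + β).im = 0) (hre : 0 < (α + β).re)
    (c : ℝ) (hc : 0 < c)
    (Θ φ : ℝ) (hφ : φ ∈ Set.Ico 0 (2 * Real.pi))
    (u : ℝ → ℝ → ℂ)
    (hu : ∀ t x : ℝ, u t x =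
      Complex.exp ((φ : ℂ) * Complex.I) * ((Real.sqrt (c / (α + β).re) : ℝ) : ℂ) *
        (((Real.tanh Θ
          + 6 * sech Θ /
            (2 * Real.sinh Θ
              + Real.sqrt (6 + 4 * (Real.sinh Θ) ^ 2)
                * Real.cosh (Real.sqrt c * (x - c * t) * sech Θ)) : ℝ) : ℂ))) :
    (∀ t x : ℝ,
        2 * Real.sinh Θ
          + Real.sqrt (6 + 4 * (Real.sinh Θ) ^ 2)
            * Real.cosh (Real.sqrt c * (x - c * t) * sech Θ) ≠ 0)
      ∧ ContDiff ℝ (⊤ : ℕ∞) (Function.uncurry u)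
      ∧ (∀ t x : ℝ, mkdvLHS α β u t x = 0)
      ∧ (Θ = 0 → ∀ t x : ℝ, u t x =
          Complex.exp ((φ : ℂ) * Complex.I)
            * ((Real.sqrt (6 * c / (α + β).re)
                * sech (Real.sqrt c * (x - c * t)) : ℝ) : ℂ)) := by
  set κ := (α + β).re
  set A := Complex.exp (φ * Complex.I) * (√(c / κ) : ℂ) with hA
  have hu' : u = travelingWave c fun z => A * (solitonProfile c Θ z : ℂ) := funext₂ hu
  have hnorm : (α + β) * ‖A‖ ^ 2 = c := by
    have hsum : α + β = (κ : ℂ) := Complex.ext rfl him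
    rw [hsum, ← Complex.ofReal_pow, norm_exp_mul_I_mul_sqrt_sq (by positivity),
      ← Complex.ofReal_mul, mul_div_cancel₀ c hre.ne']
  refine ⟨fun _ _ => (two_mul_add_sqrt_mul_cosh_pos _ _).ne', ?smooth, fun t x => ?equation, ?sech⟩
  case smooth =>
    rw [hu']
    exact contDiff_uncurry_travelingWave c
      (contDiff_const.mul (Complex.ofRealCLM.contDiff.comp (contDiff_solitonProfile c Θ)))
  case equation =>
    rw [hu', mkdvLHS_travelingWave_const_mul_ofReal, hnorm, travelingWave,
      deriv_deriv_deriv_solitonProfile hc.le]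
    push_cast
    ring
  case sech =>
    rintro rfl t x
    have hsqrt : √(6 * c / κ) = √6 * √(c / κ) := by
      rw [mul_div_assoc, Real.sqrt_mul (by norm_num)]
    rw [hu', travelingWave, solitonProfile_zero, hsqrt, hA]
    push_cast
    ring
end

section
/- Let α < 0 be real, β = 0, k ∈ ℝ, c ∈ ℝ with c + 3k² < 0, and φ ∈ [0, 2π). Then the function u(t,x) = √(3(c + 3k²)/α)·e^{iφ}·exp( i·k·(x − (3c + 8k²)·t) )·tanh( √(−(c + 3k²)/2)·(x − c·t) ) (where 3(c + 3k²)/α > 0, so the first square root is the positive real one) is smooth on ℝ×ℝ and satisfies the complex mKdV equation u_t + α·conj(u)·u·u_x + u_xxx = 0 at every point (t,x) ∈ ℝ×ℝ. -/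
open Complex (I)
open scoped ComplexConjugate

section LinearPhaseWave

/-- The wave `exp(i(kx + wt + φ)) F(x - ct)` with linear phase and envelope `F`. The envelope is
complex valued, so that derivatives of such waves are again of this form. -/
noncomputable def linearPhaseWave (k w φ c : ℝ) (F : ℝ → ℂ) (t x : ℝ) : ℂ :=
  Complex.exp (((k * x + w * t + φ : ℝ) : ℂ) * I) * F (x - c * t)

variable {k w φ c : ℝ} {F F' : ℝ → ℂ}

theorem linearPhaseWave_neg_mul (k v φ c : ℝ) (F : ℝ → ℂ) (t x : ℝ) :
    linearPhaseWave k (-k * v) φ c F t x =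
      Complex.exp (φ * I) * Complex.exp (I * (k * (x - v * t) : ℝ)) * F (x - c * t) := by
  rw [linearPhaseWave, ← Complex.exp_add]
  push_cast
  ring_nf

theorem contDiff_uncurry_linearPhaseWave {n : WithTop ℕ∞} (hF : ContDiff ℝ n F) :
    ContDiff ℝ n (Function.uncurry (linearPhaseWave k w φ c F)) := by
  have hphase : ContDiff ℝ n fun p : ℝ × ℝ => ((k * p.2 + w * p.1 + φ : ℝ) : ℂ) :=
    Complex.ofRealCLM.contDiff.comp
      (((contDiff_snd.const_smul k).add (contDiff_fst.const_smul w)).add contDiff_const)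
  have henvelope : ContDiff ℝ n fun p : ℝ × ℝ => F (p.2 - c * p.1) := hF.comp (by fun_prop)
  exact (hphase.mul contDiff_const).cexp.mul henvelope

theorem deriv_linearPhaseWave_time (hF : ∀ ξ, HasDerivAt F (F' ξ) ξ) (t x : ℝ) :
    deriv (fun s => linearPhaseWave k w φ c F s x) t =
      linearPhaseWave k w φ c (fun ξ => w * I * F ξ - c * F' ξ) t x := by
  have hphase : HasDerivAt (fun s : ℝ => k * x + w * s + φ) w t :=
    ((hasDerivAt_const_mul w).const_add (k * x)).add_const φ
  have hshift : HasDerivAt (fun s : ℝ => x - c * s) (-c) t :=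
    (hasDerivAt_const_mul c).const_sub x
  have henvelope : HasDerivAt (fun s => F (x - c * s)) (-c * F' (x - c * t)) t :=
    ((hF (x - c * t)).scomp t hshift).congr_deriv (by simp)
  refine (((hphase.ofReal_comp.mul_const I).cexp.mul henvelope).congr_deriv ?_).deriv
  unfold linearPhaseWave
  ring

theorem deriv_linearPhaseWave (hF : ∀ ξ, HasDerivAt F (F' ξ) ξ) (t : ℝ) :
    deriv (linearPhaseWave k w φ c F t) =
      linearPhaseWave k w φ c (fun ξ => F' ξ + k * I * F ξ) t := by
  funext x
  have hphase : HasDerivAt (fun y : ℝ => k * y + w * t + φ) k x :=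
    ((hasDerivAt_const_mul k).add_const (w * t)).add_const φ
  have henvelope : HasDerivAt (fun y => F (y - c * t)) (F' (x - c * t)) x :=
    (hF (x - c * t)).comp_sub_const x (c * t)
  refine (((hphase.ofReal_comp.mul_const I).cexp.mul henvelope).congr_deriv ?_).deriv
  unfold linearPhaseWave
  ring

theorem deriv_deriv_deriv_linearPhaseWave {F'' F''' : ℝ → ℂ} (hF : ∀ ξ, HasDerivAt F (F' ξ) ξ)
    (hF' : ∀ ξ, HasDerivAt F' (F'' ξ) ξ) (hF'' : ∀ ξ, HasDerivAt F'' (F''' ξ) ξ) (t : ℝ) :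
    deriv (deriv (deriv (linearPhaseWave k w φ c F t))) =
      linearPhaseWave k w φ c
        (fun ξ => F''' ξ + 3 * k * I * F'' ξ - 3 * k ^ 2 * F' ξ - k ^ 3 * I * F ξ) t := by
  have hD : ∀ ξ, HasDerivAt (fun η => F' η + k * I * F η) (F'' ξ + k * I * F' ξ) ξ :=
    fun ξ => (hF' ξ).add ((hF ξ).const_mul _)
  have hD' : ∀ ξ, HasDerivAt (fun η => F'' η + k * I * F' η) (F''' ξ + k * I * F'' ξ) ξ :=
    fun ξ => (hF'' ξ).add ((hF' ξ).const_mul _)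
  have hDD : ∀ ξ, HasDerivAt (fun η => F'' η + k * I * F' η + k * I * (F' η + k * I * F η))
      (F''' ξ + k * I * F'' ξ + k * I * (F'' ξ + k * I * F' ξ)) ξ :=
    fun ξ => (hD' ξ).add ((hD ξ).const_mul _)
  rw [deriv_linearPhaseWave hF, deriv_linearPhaseWave hD, deriv_linearPhaseWave hDD]
  congr 1
  funext ξ
  linear_combination (3 * k ^ 2 * F' ξ + k ^ 3 * I * F ξ) * Complex.I_sq

end LinearPhaseWave

section RealEnvelope

variable {k w φ c : ℝ} {f f' f'' : ℝ → ℝ}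

theorem mkdvLHS_linearPhaseWave {f''' : ℝ → ℝ} (α β : ℂ) (hf : ∀ ξ, HasDerivAt f (f' ξ) ξ)
    (hf' : ∀ ξ, HasDerivAt f' (f'' ξ) ξ) (hf'' : ∀ ξ, HasDerivAt f'' (f''' ξ) ξ) (t x : ℝ) :
    mkdvLHS α β (linearPhaseWave k w φ c fun ξ => f ξ) t x =
      linearPhaseWave k w φ c (fun ξ =>
        (f''' ξ - (c + 3 * k ^ 2) * f' ξ + (α + β) * f ξ ^ 2 * f' ξ) +
        (3 * k * f'' ξ + (w - k ^ 3) * f ξ + k * (α - β) * f ξ ^ 3) * I) t x := by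
  have hF : ∀ ξ, HasDerivAt (fun η => (f η : ℂ)) (f' ξ) ξ := fun ξ => (hf ξ).ofReal_comp
  have hF' : ∀ ξ, HasDerivAt (fun η => (f' η : ℂ)) (f'' ξ) ξ := fun ξ => (hf' ξ).ofReal_comp
  have hF'' : ∀ ξ, HasDerivAt (fun η => (f'' η : ℂ)) (f''' ξ) ξ := fun ξ => (hf'' ξ).ofReal_comp
  have hconj : deriv (fun y => conj (linearPhaseWave k w φ c (fun ξ => f ξ) t y)) x =
      conj (deriv (linearPhaseWave k w φ c (fun ξ => f ξ) t) x) := deriv.star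
  unfold mkdvLHS
  rw [hconj, deriv_deriv_deriv_linearPhaseWave hF hF' hF'', deriv_linearPhaseWave_time hF,
    deriv_linearPhaseWave hF]
  simp only [linearPhaseWave, map_mul, map_add, Complex.conj_ofReal, Complex.conj_I]
  have hunit : conj (Complex.exp (((k * x + w * t + φ : ℝ) : ℂ) * I)) *
      Complex.exp (((k * x + w * t + φ : ℝ) : ℂ) * I) = 1 := by
    rw [Complex.conj_mul', Complex.norm_exp_ofReal_mul_I]
    norm_num
  generalize Complex.exp (((k * x + w * t + φ : ℝ) : ℂ) * I) = e at hunit ⊢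
  generalize x - c * t = ξ
  linear_combination (e * f ξ ^ 2 * (α * (f' ξ + k * I * f ξ) + β * (f' ξ - k * I * f ξ))) * hunit

theorem mkdvLHS_linearPhaseWave_eq_zero_of_ode {α : ℝ} (hf : ∀ ξ, HasDerivAt f (f' ξ) ξ)
    (hf' : ∀ ξ, HasDerivAt f' ((c + 3 * k ^ 2) * f ξ - α / 3 * f ξ ^ 3) ξ) (t x : ℝ) :
    mkdvLHS α 0 (linearPhaseWave k (-k * (3 * c + 8 * k ^ 2)) φ c fun ξ => f ξ) t x = 0 := by
  have hf'' : ∀ ξ, HasDerivAt (fun η => (c + 3 * k ^ 2) * f η - α / 3 * f η ^ 3)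
      ((c + 3 * k ^ 2) * f' ξ - α * f ξ ^ 2 * f' ξ) ξ := fun ξ =>
    (((hf ξ).const_mul _).sub (((hf ξ).pow 3).const_mul _)).congr_deriv (by push_cast; ring)
  rw [mkdvLHS_linearPhaseWave α 0 hf hf' hf'', linearPhaseWave]
  push_cast
  ring

end RealEnvelope

section Tanh

theorem contDiff_real_tanh {n : WithTop ℕ∞} : ContDiff ℝ n Real.tanh := by
  rw [funext Real.tanh_eq_sinh_div_cosh]
  exact Real.contDiff_sinh.div Real.contDiff_cosh fun x => (Real.cosh_pos x).ne'

theorem hasDerivAt_real_tanh (x : ℝ) : HasDerivAt Real.tanh (1 - Real.tanh x ^ 2) x := by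
  have hcosh : Real.cosh x ≠ 0 := (Real.cosh_pos x).ne'
  rw [funext Real.tanh_eq_sinh_div_cosh]
  refine ((Real.hasDerivAt_sinh x).fun_div (Real.hasDerivAt_cosh x) hcosh).congr_deriv ?_
  field_simp

theorem hasDerivAt_tanh_const_mul (b ξ : ℝ) :
    HasDerivAt (fun η => Real.tanh (b * η)) (b * (1 - Real.tanh (b * ξ) ^ 2)) ξ :=
  ((hasDerivAt_real_tanh (b * ξ)).comp ξ (hasDerivAt_const_mul b)).congr_deriv (mul_comm _ _)

theorem hasDerivAt_one_sub_tanh_const_mul_sq (b ξ : ℝ) :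
    HasDerivAt (fun η => 1 - Real.tanh (b * η) ^ 2)
      (2 * b * (Real.tanh (b * ξ) ^ 3 - Real.tanh (b * ξ))) ξ :=
  (((hasDerivAt_tanh_const_mul b ξ).pow 2).const_sub 1).congr_deriv (by push_cast; ring)

end Tanh

theorem mkdvLHS_tanh_kink_eq_zero {α k c A b : ℝ} (hA : A ^ 2 * α = 3 * (c + 3 * k ^ 2))
    (hb : b ^ 2 = -(c + 3 * k ^ 2) / 2) (φ t x : ℝ) :
    mkdvLHS α 0 (linearPhaseWave k (-k * (3 * c + 8 * k ^ 2)) φ c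
      fun ξ => (A * Real.tanh (b * ξ) : ℝ)) t x = 0 := by
  refine mkdvLHS_linearPhaseWave_eq_zero_of_ode
    (fun ξ => (hasDerivAt_tanh_const_mul b ξ).const_mul A) (fun ξ => ?_) t x
  refine (((hasDerivAt_one_sub_tanh_const_mul_sq b ξ).const_mul b).const_mul A).congr_deriv ?_
  linear_combination 2 * A * (Real.tanh (b * ξ) ^ 3 - Real.tanh (b * ξ)) * hb +
    A * Real.tanh (b * ξ) ^ 3 / 3 * hA

/-- the tanh kink with linear phase, for `α < 0` real, `β = 0`,
`c + 3k² < 0`. -/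
theorem stmt14 (α : ℝ) (hα : α < 0) (k c : ℝ) (hck : c + 3 * k ^ 2 < 0)
    (φ : ℝ) (hφ : φ ∈ Set.Ico 0 (2 * Real.pi))
    (u : ℝ → ℝ → ℂ)
    (hu : ∀ t x : ℝ, u t x =
      ((Real.sqrt (3 * (c + 3 * k ^ 2) / α) : ℝ) : ℂ)
        * Complex.exp ((φ : ℂ) * Complex.I)
        * Complex.exp (Complex.I * ((k * (x - (3 * c + 8 * k ^ 2) * t) : ℝ) : ℂ))
        * ((Real.tanh (Real.sqrt (-(c + 3 * k ^ 2) / 2) * (x - c * t)) : ℝ) : ℂ)) :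
    ContDiff ℝ (⊤ : ℕ∞) (Function.uncurry u)
      ∧ ∀ t x : ℝ, mkdvLHS (α : ℂ) 0 u t x = 0 := by
  have hA : Real.sqrt (3 * (c + 3 * k ^ 2) / α) ^ 2 * α = 3 * (c + 3 * k ^ 2) := by
    rw [Real.sq_sqrt (div_nonneg_of_nonpos (by linarith) hα.le), div_mul_cancel₀ _ hα.ne]
  have hb : Real.sqrt (-(c + 3 * k ^ 2) / 2) ^ 2 = -(c + 3 * k ^ 2) / 2 :=
    Real.sq_sqrt (by linarith)
  generalize Real.sqrt (3 * (c + 3 * k ^ 2) / α) = A at hu hA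
  generalize Real.sqrt (-(c + 3 * k ^ 2) / 2) = b at hu hb
  obtain rfl : u = linearPhaseWave k (-k * (3 * c + 8 * k ^ 2)) φ c
      fun ξ => (A * Real.tanh (b * ξ) : ℝ) := by
    funext t x
    simp only [hu, linearPhaseWave_neg_mul, Complex.ofReal_mul]
    ring
  have hprofile : ContDiff ℝ (⊤ : ℕ∞) fun ξ => A * Real.tanh (b * ξ) :=
    contDiff_const.mul (contDiff_real_tanh.comp (contDiff_const.mul contDiff_id))
  exact ⟨contDiff_uncurry_linearPhaseWave (Complex.ofRealCLM.contDiff.comp hprofile),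
    mkdvLHS_tanh_kink_eq_zero hA hb φ⟩
end
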